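/- For a connected graded reduced affine monoid S, the graded catenary degree c_gr(S) equals the minimal non-negative integer d such that there exists a generating set Λ ⊆ M × M of the defining congruence ∼_S satisfying |α|_gr ≤ d and |γ|_gr ≤ d for all pairs (x^α, x^γ) ∈ Λ. -/

import Mathlib

/-!
For every `d`, the relations `fac α = fac γ` are all realized by chains of weight at most `d`
if and only if `∼_S` is generated by pairs of graded degree at most `d`; hence the two sets of
admissible `d` coincide, and so do their minima.

The distance between `α` and `γ` only depends on the reduced pair `(α - gcd, γ - gcd)`, so it is
invariant under translation. Therefore "being connected by a chain of weight at most `d`" is a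
congruence, `chainCon`, contained in `∼_S`. It contains every pair of `∼_S` whose components have
degree at most `d`, hence also the congruence generated by any set of such pairs. In the other
direction, cancellativity of `S` shows that the reduced pair of a chain link is itself a pair
of `∼_S`, of degree at most `d`, and the link is recovered from it by adding the gcd; so `∼_S` is
generated by its pairs of degree at most `d` as soon as all its pairs are connected by chains.
-/

/-! ## Common definitions: atoms, factorizations, catenary degrees -/

/-- An atom of an additive commutative monoid: a nonzero element that cannot be
written as a sum of two nonzero elements. -/
def IsAtm {S : Type*} [AddCommMonoid S] (a : S) : Prop :=
  a ≠ 0 ∧ ∀ b c : S, a = b + c → b = 0 ∨ c = 0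

/-- The set of atoms of an additive commutative monoid. -/
def Atoms (S : Type*) [AddCommMonoid S] : Set S := {a | IsAtm a}

/-- Exponent vectors: the free commutative monoid on the set of atoms (written additively). -/
abbrev FreeExp (S : Type*) [AddCommMonoid S] := ↥(Atoms S) →₀ ℕ

/-- The factorization homomorphism, sending an exponent vector `α` to `a^α ∈ S`. -/
def fac {S : Type*} [AddCommMonoid S] (α : FreeExp S) : S :=
  α.sum fun a n => n • (a : S)

lemma fac_add {S : Type*} [AddCommMonoid S] (α β : FreeExp S) :
    fac (α + β) = fac α + fac β :=
  Finsupp.sum_add_index' (fun _ => zero_nsmul _) (fun a m n => add_nsmul (a : S) m n)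

/-- Total degree (length) `|α|` of an exponent vector. -/
def degE {σ : Type*} (α : σ →₀ ℕ) : ℕ := α.sum fun _ n => n

/-- Pointwise minimum (the gcd in the free commutative monoid). -/
noncomputable def gcdE {σ : Type*} (α β : σ →₀ ℕ) : σ →₀ ℕ :=
  Finsupp.zipWith min (min_self 0) α β

/-- The distance `d(α,γ)` between two exponent vectors. -/
noncomputable def dDist {σ : Type*} (α β : σ →₀ ℕ) : ℕ :=
  max (degE (α - gcdE α β)) (degE (β - gcdE α β))

/-- `α` and `γ` can be connected by a `d`-chain. -/
def ChainConn {S : Type*} [AddCommMonoid S] (d : ℕ) (α γ : FreeExp S) : Prop :=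
  ∃ (k : ℕ) (c : ℕ → FreeExp S), c 0 = α ∧ c k = γ ∧
    ∀ j < k, fac (c j) = fac (c (j + 1)) ∧ dDist (c j) (c (j + 1)) ≤ d

/-- The catenary degree of `S`. -/
noncomputable def catDeg (S : Type*) [AddCommMonoid S] : ℕ :=
  sInf {d | ∀ α γ : FreeExp S, fac α = fac γ → ChainConn d α γ}

/-- Graded degree `|α|_gr` of an exponent vector, w.r.t. a weight (grading) `w` on `S`. -/
def gdegE {S : Type*} [AddCommMonoid S] (w : S → ℕ) (α : FreeExp S) : ℕ :=
  α.sum fun a n => n * w (a : S)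

/-- The graded distance `d_gr(α,γ)`. -/
noncomputable def dDistGr {S : Type*} [AddCommMonoid S] (w : S → ℕ) (α β : FreeExp S) : ℕ :=
  max (gdegE w (α - gcdE α β)) (gdegE w (β - gcdE α β))

/-- `α` and `γ` can be connected by a chain of weight at most `d`. -/
def ChainConnGr {S : Type*} [AddCommMonoid S] (w : S → ℕ) (d : ℕ) (α γ : FreeExp S) : Prop :=
  ∃ (k : ℕ) (c : ℕ → FreeExp S), c 0 = α ∧ c k = γ ∧
    ∀ j < k, fac (c j) = fac (c (j + 1)) ∧ dDistGr w (c j) (c (j + 1)) ≤ d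

/-- The graded catenary degree of `S` w.r.t. the grading `w`. -/
noncomputable def catDegGr (S : Type*) [AddCommMonoid S] (w : S → ℕ) : ℕ :=
  sInf {d | ∀ α γ : FreeExp S, fac α = fac γ → ChainConnGr w d α γ}

/-- The defining congruence `∼_S` of `S` on the free commutative monoid on the atoms. -/
def defCon (S : Type*) [AddCommMonoid S] : AddCon (FreeExp S) where
  r α β := fac α = fac β
  iseqv := ⟨fun _ => rfl, Eq.symm, Eq.trans⟩
  add' := fun {a b c d} h1 h2 => by
    have h1' : fac a = fac b := h1
    have h2' : fac c = fac d := h2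
    show fac (a + c) = fac (b + d)
    rw [fac_add, fac_add, h1', h2']

/-- A reduced affine monoid: commutative, cancellative, a finitely generated monoid embedding
into a finitely generated free abelian group, whose only unit is the identity. -/
class IsReducedAffine (S : Type*) [AddCommMonoid S] : Prop where
  cancel : ∀ a b c : S, a + b = a + c → b = c
  affine : ∃ (k : ℕ) (f : S →+ (Fin k → ℤ)), Function.Injective f
  fg : AddMonoid.FG S
  reduced : ∀ s : S, IsAddUnit s → s = 0

/-! ## The tilde construction -/

/-- The atoms of `S̃`: pairs `a[i]` with `a` an atom of `S` and `0 ≤ i ≤ |a|`. -/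
def ATil (S : Type*) [AddCommMonoid S] (w : S → ℕ) : Type _ :=
  {p : ↥(Atoms S) × ℕ // p.2 ≤ w (p.1 : S)}

/-- Constructor `a[i]` for atoms of `S̃`. -/
def atil {S : Type*} [AddCommMonoid S] (w : S → ℕ) (a : ↥(Atoms S)) (i : ℕ)
    (h : i ≤ w (a : S)) : ATil S w := ⟨(a, i), h⟩

/-- The map `κ : ℕ₀^{𝒜(S̃)} → ℕ₀^{𝒜(S)}`, `κ(λ)(a) = Σ_i λ(a[i])`. -/
noncomputable def kap (S : Type*) [AddCommMonoid S] (w : S → ℕ) :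
    (ATil S w →₀ ℕ) → FreeExp S :=
  Finsupp.mapDomain fun p => p.val.1

/-- The map `δ : ℕ₀^{𝒜(S̃)} → ℕ₀`, `δ(λ) = Σ i·λ(a[i])`. -/
def delt {S : Type*} [AddCommMonoid S] (w : S → ℕ) (l : ATil S w →₀ ℕ) : ℕ :=
  l.sum fun p n => n * p.val.2

lemma kap_add {S : Type*} [AddCommMonoid S] (w : S → ℕ) (l m : ATil S w →₀ ℕ) :
    kap S w (l + m) = kap S w l + kap S w m := Finsupp.mapDomain_add

lemma delt_add {S : Type*} [AddCommMonoid S] (w : S → ℕ) (l m : ATil S w →₀ ℕ) :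
    delt w (l + m) = delt w l + delt w m :=
  Finsupp.sum_add_index' (fun _ => zero_mul _) (fun _ m n => add_mul m n _)

/-- The defining congruence of `S̃` (under the identification `𝒜(S̃) = {a[i]}`,
`x^λ ∼_{S̃} x^μ` iff `a^{κλ} = a^{κμ}` in `S` and `δλ = δμ`). -/
def defConTil (S : Type*) [AddCommMonoid S] (w : S → ℕ) : AddCon (ATil S w →₀ ℕ) where
  r l m := fac (kap S w l) = fac (kap S w m) ∧ delt w l = delt w m
  iseqv := ⟨fun _ => ⟨rfl, rfl⟩, fun h => ⟨h.1.symm, h.2.symm⟩,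
    fun h h' => ⟨h.1.trans h'.1, h.2.trans h'.2⟩⟩
  add' := fun h1 h2 =>
    ⟨by rw [kap_add, kap_add, fac_add, fac_add, h1.1, h2.1],
     by rw [delt_add, delt_add, h1.2, h2.2]⟩

/-- The quadratic relations `(x_{a[k]} x_{b[l]}, x_{a[k+1]} x_{b[l-1]})`,
for `a, b ∈ 𝒜(S)`, `0 ≤ k ≤ |a| - 1`, `1 ≤ l ≤ |b|`. -/
def quadRel (S : Type*) [AddCommMonoid S] (w : S → ℕ) :
    (ATil S w →₀ ℕ) → (ATil S w →₀ ℕ) → Prop := fun x y =>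
  ∃ (a b : ↥(Atoms S)) (k l : ℕ) (hk : k + 1 ≤ w (a : S)) (_ : 1 ≤ l) (hl : l ≤ w (b : S)),
    x = Finsupp.single (atil w a k (Nat.le_of_succ_le hk)) 1 +
        Finsupp.single (atil w b l hl) 1 ∧
    y = Finsupp.single (atil w a (k + 1) hk) 1 +
        Finsupp.single (atil w b (l - 1) (le_trans (Nat.sub_le l 1) hl)) 1

/-! ## Block monoids -/

/-- The block monoid `ℬ(g)` of a tuple `g = (g₁,…,g_m)` of elements of a commutative
monoid `G`. -/
def BlockT {G : Type*} [CommMonoid G] {m : ℕ} (g : Fin m → G) :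
    AddSubmonoid (Fin m → ℕ) where
  carrier := {α | ∏ i, g i ^ α i = 1}
  zero_mem' := by simp
  add_mem' := by
    intro a b ha hb
    simp only [Set.mem_setOf_eq] at *
    show ∏ i, g i ^ (a i + b i) = 1
    simp [pow_add, Finset.prod_mul_distrib, ha, hb]

/-- The block monoid `ℬ(G₀)` of a subset `G₀` of a commutative monoid `G`. -/
noncomputable def BlockS {G : Type*} [CommMonoid G] (G₀ : Set G) : AddSubmonoid (G₀ →₀ ℕ) where
  carrier := {α | (α.prod fun x n => (x : G) ^ n) = 1}
  zero_mem' := by simp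
  add_mem' := by
    intro a b ha hb
    simp only [Set.mem_setOf_eq] at *
    rw [Finsupp.prod_add_index' (fun x => pow_zero _) (fun x m n => pow_add _ m n), ha, hb,
      one_mul]

/-- The monoid `S̃` for `S = ℬ(g)` graded by the last coordinate. -/
def TildeB {G : Type*} [CommMonoid G] {m : ℕ} (g : Fin (m + 1) → G) :
    AddSubmonoid ((Fin (m + 1) → ℕ) × ℕ) where
  carrier := {p | p.1 ∈ BlockT g ∧ p.2 ≤ p.1 (Fin.last m)}
  zero_mem' := ⟨(BlockT g).zero_mem, le_rfl⟩
  add_mem' := by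
    intro a b ha hb
    exact ⟨(BlockT g).add_mem ha.1 hb.1, add_le_add ha.2 hb.2⟩

/-- The Davenport constant `D(G₀)`: the maximal length of an atom of `ℬ(G₀)`. -/
noncomputable def DavenportC {G : Type*} [CommMonoid G] (G₀ : Set G) : ℕ :=
  sSup {k | ∃ γ : ↥(BlockS G₀), IsAtm γ ∧ degE (γ : G₀ →₀ ℕ) = k}

/-- The little Davenport constant `d(G₀)`: the maximal length of a sequence over `G₀`
containing no product-one subsequence. -/
noncomputable def littleDav {G : Type*} [CommMonoid G] (G₀ : Set G) : ℕ :=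
  sSup {k | ∃ α : G₀ →₀ ℕ, degE α = k ∧
    ∀ γ : ↥(BlockS G₀), IsAtm γ → ∃ x : G₀, α x < (γ : G₀ →₀ ℕ) x}

/-! ## Gröbner systems -/

/-- An admissible total order (given as a strict order relation) on a free commutative
monoid, written additively. -/
def IsAdmissible {F : Type*} [AddCommMonoid F] (lt : F → F → Prop) : Prop :=
  (∀ x y, lt x y ∨ x = y ∨ lt y x) ∧ (∀ x y z, lt x y → lt y z → lt x z) ∧
  (∀ x, ¬ lt x x) ∧ (∀ x y z, lt x y → lt (x + z) (y + z)) ∧ (∀ x, x ≠ 0 → lt 0 x)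

/-- `Λ` is a Gröbner system of the congruence `c` with respect to the order `lt`. -/
def IsGroebnerSystem {F : Type*} [AddCommMonoid F] (lt : F → F → Prop) (c : AddCon F)
    (Λ : Set (F × F)) : Prop :=
  Λ.Finite ∧ (∀ p ∈ Λ, c p.1 p.2 ∧ lt p.2 p.1) ∧
  (∀ z : F, (∀ p ∈ Λ, ¬ ∃ u, z = p.1 + u) → ∀ y, c z y → z = y ∨ lt z y)

/-- The ordering on positions `a[i]` induced by an enumeration of the atoms. -/
def posLt {S : Type*} [AddCommMonoid S] {w : S → ℕ} {n : ℕ} (e : Fin n ≃ ↥(Atoms S))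
    (q p : ATil S w) : Prop :=
  e.symm q.val.1 < e.symm p.val.1 ∨ (e.symm q.val.1 = e.symm p.val.1 ∧ q.val.2 < p.val.2)

/-- The admissible order on the free commutative monoid on `𝒜(S̃)` extending the order
`lt` on the free commutative monoid on `𝒜(S)`. -/
def ltTil {S : Type*} [AddCommMonoid S] (w : S → ℕ) (lt : FreeExp S → FreeExp S → Prop)
    {n : ℕ} (e : Fin n ≃ ↥(Atoms S)) (mu lam : ATil S w →₀ ℕ) : Prop :=
  lt (kap S w mu) (kap S w lam) ∨
  (kap S w mu = kap S w lam ∧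
    ∃ p : ATil S w, lam p < mu p ∧ ∀ q : ATil S w, posLt e q p → mu q = lam q)

/-- The set `Γ₂` of pairs `(x_{a[i]} x_{b[j]}, x_{a[i-1]} x_{b[j+1]})` with `x_a ≺ x_b`,
`0 < i ≤ |a|`, `0 ≤ j < |b|`. -/
def Gam2 (S : Type*) [AddCommMonoid S] (w : S → ℕ) (lt : FreeExp S → FreeExp S → Prop) :
    Set ((ATil S w →₀ ℕ) × (ATil S w →₀ ℕ)) :=
  {pr | ∃ (a b : ↥(Atoms S)) (i j : ℕ) (_ : 0 < i) (hi : i ≤ w (a : S)) (hj : j + 1 ≤ w (b : S)),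
    lt (Finsupp.single a 1) (Finsupp.single b 1) ∧
    pr = (Finsupp.single (atil w a i hi) 1 +
            Finsupp.single (atil w b j (Nat.le_of_succ_le hj)) 1,
          Finsupp.single (atil w a (i - 1) (le_trans (Nat.sub_le i 1) hi)) 1 +
            Finsupp.single (atil w b (j + 1) hj) 1)}

/-- The set `Γ₃` of pairs `(x_{a[i]} x_{a[j]}, x_{a[i-1]} x_{a[j+1]})` with `0 < i ≤ j < |a|`. -/
def Gam3 (S : Type*) [AddCommMonoid S] (w : S → ℕ) :
    Set ((ATil S w →₀ ℕ) × (ATil S w →₀ ℕ)) :=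
  {pr | ∃ (a : ↥(Atoms S)) (i j : ℕ) (_ : 0 < i) (hij : i ≤ j) (hj : j + 1 ≤ w (a : S)),
    pr = (Finsupp.single (atil w a i (le_trans hij (Nat.le_of_succ_le hj))) 1 +
            Finsupp.single (atil w a j (Nat.le_of_succ_le hj)) 1,
          Finsupp.single (atil w a (i - 1)
              (le_trans (Nat.sub_le i 1) (le_trans hij (Nat.le_of_succ_le hj)))) 1 +
            Finsupp.single (atil w a (j + 1) hj) 1)}

/-! ## The presentation homomorphism for semigroup rings -/

/-- The homomorphism `π_R : R[x_a : a ∈ 𝒜(S)] → R[S]`, `x_a ↦ a`. -/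
noncomputable def piR (R : Type*) (S : Type*) [CommRing R] [AddCommMonoid S] :
    MvPolynomial ↥(Atoms S) R →ₐ[R] AddMonoidAlgebra R S :=
  MvPolynomial.aeval fun a => AddMonoidAlgebra.single (a : S) 1

lemma sub_gcdE_left {σ : Type*} (α β : σ →₀ ℕ) : α - gcdE α β = α - β := by
  ext a
  simp only [gcdE, Finsupp.tsub_apply, Finsupp.zipWith_apply]
  omega

lemma sub_gcdE_right {σ : Type*} (α β : σ →₀ ℕ) : β - gcdE α β = β - α := by
  ext a
  simp only [gcdE, Finsupp.tsub_apply, Finsupp.zipWith_apply]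
  omega

/-- In terms of truncated subtraction, `d_gr(α,β)` is the larger of the degrees of `α - β` and
`β - α`. -/
lemma dDistGr_eq {S : Type*} [AddCommMonoid S] (w : S → ℕ) (α β : FreeExp S) :
    dDistGr w α β = max (gdegE w (α - β)) (gdegE w (β - α)) := by
  rw [dDistGr, sub_gcdE_left, sub_gcdE_right]

lemma dDistGr_comm {S : Type*} [AddCommMonoid S] (w : S → ℕ) (α β : FreeExp S) :
    dDistGr w α β = dDistGr w β α := by
  rw [dDistGr_eq, dDistGr_eq, max_comm]

lemma dDistGr_add_right {S : Type*} [AddCommMonoid S] (w : S → ℕ) (α β δ : FreeExp S) :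
    dDistGr w (α + δ) (β + δ) = dDistGr w α β := by
  rw [dDistGr_eq, dDistGr_eq, add_tsub_add_eq_tsub_right, add_tsub_add_eq_tsub_right]

lemma gdegE_add {S : Type*} [AddCommMonoid S] (w : S → ℕ) (α β : FreeExp S) :
    gdegE w (α + β) = gdegE w α + gdegE w β :=
  Finsupp.sum_add_index' (fun _ => zero_mul _) (fun _ m n => add_mul m n _)

lemma gdegE_mono {S : Type*} [AddCommMonoid S] (w : S → ℕ) {α β : FreeExp S} (h : α ≤ β) :
    gdegE w α ≤ gdegE w β := by
  rw [← tsub_add_cancel_of_le h, gdegE_add]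
  exact Nat.le_add_left _ _

lemma dDistGr_le {S : Type*} [AddCommMonoid S] (w : S → ℕ) {d : ℕ} {α β : FreeExp S}
    (hα : gdegE w α ≤ d) (hβ : gdegE w β ≤ d) : dDistGr w α β ≤ d := by
  rw [dDistGr_eq]
  exact max_le ((gdegE_mono w tsub_le_self).trans hα) ((gdegE_mono w tsub_le_self).trans hβ)

/-- A single link of a chain of weight at most `d`. -/
def GrLink {S : Type*} [AddCommMonoid S] (w : S → ℕ) (d : ℕ) (α γ : FreeExp S) : Prop :=
  fac α = fac γ ∧ dDistGr w α γ ≤ d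

lemma GrLink.symm {S : Type*} [AddCommMonoid S] {w : S → ℕ} {d : ℕ} {α γ : FreeExp S}
    (h : GrLink w d α γ) : GrLink w d γ α :=
  ⟨h.1.symm, by rw [dDistGr_comm]; exact h.2⟩

lemma GrLink.add_right {S : Type*} [AddCommMonoid S] {w : S → ℕ} {d : ℕ} {α γ : FreeExp S}
    (h : GrLink w d α γ) (δ : FreeExp S) : GrLink w d (α + δ) (γ + δ) :=
  ⟨by rw [fac_add, fac_add, h.1], by rw [dDistGr_add_right]; exact h.2⟩

lemma chainConnGr_iff {S : Type*} [AddCommMonoid S] (w : S → ℕ) (d : ℕ) (α γ : FreeExp S) :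
    ChainConnGr w d α γ ↔ Relation.ReflTransGen (GrLink w d) α γ := by
  constructor
  · rintro ⟨k, c, rfl, rfl, h⟩
    induction k with
    | zero => exact .refl
    | succ k ih => exact (ih fun j hj => h j (by omega)).tail (h k (by omega))
  · intro h
    induction h using Relation.ReflTransGen.head_induction_on with
    | refl => exact ⟨0, fun _ => γ, rfl, rfl, fun j hj => absurd hj (Nat.not_lt_zero j)⟩
    | @head α β hl _ ih =>
      obtain ⟨k, c, h0, hk, hc⟩ := ih
      refine ⟨k + 1, fun n => Nat.casesOn n α c, rfl, hk, fun j hj => ?_⟩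
      cases j with
      | zero =>
        show GrLink w d α (c 0)
        rw [h0]
        exact hl
      | succ j => exact hc j (by omega)

/-- The congruence "`α` and `γ` can be connected by a chain of weight at most `d`". -/
def chainCon {S : Type*} [AddCommMonoid S] (w : S → ℕ) (d : ℕ) : AddCon (FreeExp S) where
  r := Relation.ReflTransGen (GrLink w d)
  iseqv := ⟨fun _ => .refl,
    fun h => (@Relation.ReflTransGen.stdSymm _ (GrLink w d) ⟨fun _ _ => GrLink.symm⟩).symm _ _ h, .trans⟩
  add' := by
    intro α β γ δ h h'
    refine (h.lift (· + γ) fun _ _ hl => hl.add_right γ).trans ?_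
    refine h'.lift (β + ·) fun x y hl => ?_
    show GrLink w d (β + x) (β + y)
    rw [add_comm β x, add_comm β y]
    exact hl.add_right β

/-- Cancelling the common part of two factorizations of the same element leaves two
factorizations of the same element. -/
lemma fac_tsub_eq {S : Type*} [AddCommMonoid S] [IsReducedAffine S] {α γ : FreeExp S}
    (h : fac α = fac γ) : fac (α - γ) = fac (γ - α) := by
  apply IsReducedAffine.cancel (fac α)
  -- Both `γ + (α - γ)` and `α + (γ - α)` are the pointwise maximum of `α` and `γ`.
  have hmax : γ + (α - γ) = α + (γ - α) := by
    ext a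
    simp only [Finsupp.add_apply, Finsupp.tsub_apply]
    omega
  calc fac α + fac (α - γ) = fac (γ + (α - γ)) := by rw [h, fac_add]
    _ = fac α + fac (γ - α) := by rw [hmax, fac_add]

/-- A link of weight at most `d` is a translate, by the gcd, of a pair of `∼_S` of degree at
most `d`. -/
lemma GrLink.addConGen {S : Type*} [AddCommMonoid S] [IsReducedAffine S] {w : S → ℕ} {d : ℕ}
    {α γ : FreeExp S} (h : GrLink w d α γ) :
    _root_.addConGen (fun x y : FreeExp S => fac x = fac y ∧ gdegE w x ≤ d ∧ gdegE w y ≤ d)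
      α γ := by
  obtain ⟨hf, hd⟩ := h
  rw [dDistGr_eq, max_le_iff] at hd
  have hα : α - γ + gcdE α γ = α := by
    ext a
    simp only [gcdE, Finsupp.add_apply, Finsupp.tsub_apply, Finsupp.zipWith_apply]
    omega
  have hγ : γ - α + gcdE α γ = γ := by
    ext a
    simp only [gcdE, Finsupp.add_apply, Finsupp.tsub_apply, Finsupp.zipWith_apply]
    omega
  have key := (_root_.addConGen
      fun x y : FreeExp S => fac x = fac y ∧ gdegE w x ≤ d ∧ gdegE w y ≤ d).add
    (AddConGen.Rel.of (α - γ) (γ - α) ⟨fac_tsub_eq hf, hd⟩) (AddCon.refl _ (gcdE α γ))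
  rwa [hα, hγ] at key

/-- Proposition 3.3: for a connected graded reduced affine monoid `S`,
the graded catenary degree equals the minimal `d` such that `∼_S` is generated by a set of
pairs all of whose components have graded degree at most `d`. -/
theorem gradedCatDeg_eq_presentation_degree (S : Type) [AddCommMonoid S] [IsReducedAffine S]
    (w : S → ℕ) (hw : ∀ s t : S, w (s + t) = w s + w t)
    (hconn : ∀ s : S, w s = 0 → s = 0) :
    catDegGr S w = sInf {d | ∃ Λ : Set (FreeExp S × FreeExp S),
      addConGen (fun x y => (x, y) ∈ Λ) = defCon S ∧
      ∀ p ∈ Λ, gdegE w p.1 ≤ d ∧ gdegE w p.2 ≤ d} := by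
  unfold catDegGr
  congr 1
  ext d
  simp only [Set.mem_ofPred_eq]
  constructor
  · intro h
    refine ⟨{p | fac p.1 = fac p.2 ∧ gdegE w p.1 ≤ d ∧ gdegE w p.2 ≤ d}, ?_, fun p hp => hp.2⟩
    apply le_antisymm
    · exact AddCon.addConGen_le.2 fun x y hxy => hxy.1
    · intro α γ hαγ
      have hc := (chainConnGr_iff w d α γ).1 (h α γ hαγ)
      clear hαγ
      induction hc with
      | refl => exact AddCon.refl _ _
      | tail _ hl ih => exact AddCon.trans _ ih hl.addConGen
  · rintro ⟨Λ, hΛ, hd⟩ α γ hαγ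
    have hle : addConGen (fun x y => (x, y) ∈ Λ) ≤ chainCon w d := by
      refine AddCon.addConGen_le.2 fun x y hxy => ?_
      have hfac : addConGen (fun x y => (x, y) ∈ Λ) x y := AddConGen.Rel.of _ _ hxy
      rw [hΛ] at hfac
      exact Relation.ReflTransGen.single ⟨hfac, dDistGr_le w (hd _ hxy).1 (hd _ hxy).2⟩
    rw [hΛ] at hle
    exact (chainConnGr_iff w d α γ).2 (hle hαγ)
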